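/- For every n ≥ 1, the cardinality |K_n| of Kiselman's semigroup K_n is even if n is odd, and odd if n is even. Equivalently, for every k ≥ 1, |K_{2k+1}| is even and |K_{2k}| is odd (and |K_1| = 2 is even). -/

import Mathlib

namespace Kiselman

/-- The defining relations of Kiselman's semigroup on the free monoid over `Fin n`,
where the index `i : Fin n` represents the generator `a_{i+1}` (so letters are 0-based). -/
def Rel (n : ℕ) : FreeMonoid (Fin n) → FreeMonoid (Fin n) → Prop := fun u v =>
  (∃ i : Fin n, u = .of i * .of i ∧ v = .of i) ∨
  (∃ i j : Fin n, j < i ∧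
    ((u = .of i * .of j * .of i ∧ v = .of i * .of j) ∨
     (u = .of j * .of i * .of j ∧ v = .of i * .of j)))

/-- Kiselman's semigroup (monoid) `K n`, presented by the relations `Rel n`. -/
def K (n : ℕ) : Type := (conGen (Rel n)).Quotient

instance (n : ℕ) : Monoid (K n) := inferInstanceAs (Monoid (conGen (Rel n)).Quotient)

/-- The canonical epimorphism `φ` from the free monoid onto `K n`. -/
def phi (n : ℕ) : FreeMonoid (Fin n) →* K n := Con.mk' _

/-- `φ` applied to a word given as a list of (0-based) letters. -/
def phiL (n : ℕ) (w : List (Fin n)) : K n := phi n (FreeMonoid.ofList w)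

/-- The generator `a_{i+1}` of `K n` (`i` is the 0-based index). -/
def gen {n : ℕ} (i : Fin n) : K n := phi n (FreeMonoid.of i)

/-- The word `a_hi a_{hi-1} ⋯ a_lo` (letters named 1-based), as a list of 0-based indices:
`[hi-1, hi-2, …, lo-1]` (capped at `n`). -/
def descList (n lo hi : ℕ) : List (Fin n) :=
  ((List.finRange n).filter (fun k => decide (lo ≤ k.val + 1 ∧ k.val + 1 ≤ hi))).reverse

/-- The zero element `f = a_n a_{n-1} ⋯ a_2 a_1` of `K n`. -/
def fEl (n : ℕ) : K n := phiL n (descList n 1 n)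

/-- A word `w` is canonical if for every factorization `w = p ++ [i] ++ u ++ [i] ++ q`
there are letters `j > i` and `k < i` occurring in `u`. -/
def Canonical {n : ℕ} (w : List (Fin n)) : Prop :=
  ∀ (p u q : List (Fin n)) (i : Fin n),
    w = p ++ [i] ++ u ++ [i] ++ q →
    (∃ j ∈ u, i < j) ∧ (∃ k ∈ u, k < i)

/-- The submonoid of `K n` generated by `{a_2, a_3, …, a_n}`. -/
def upper (n : ℕ) : Submonoid (K n) := Submonoid.closure (gen '' {i : Fin n | i.val ≠ 0})

/-- The submonoid of `K n` generated by `{a_1, a_2, …, a_{n-1}}`. -/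
def lower (n : ℕ) : Submonoid (K n) := Submonoid.closure (gen '' {i : Fin n | i.val + 1 ≠ n})

/-- `m(x) = min { i ∈ {0,…,n} : x ⬝ (a_i a_{i-1} ⋯ a_1) = f }`. -/
noncomputable def mIdx {n : ℕ} (x : K n) : ℕ :=
  sInf {i : ℕ | x * phiL n (descList n 1 i) = fEl n}

section Rewriting

variable {α : Type*}

theorem exists_eq_append_of_getElem? {w : List α} {p : ℕ} {i : α} (h : w[p]? = some i) :
    ∃ x y, w = x ++ i :: y ∧ x.length = p := by
  obtain ⟨hp, rfl⟩ := List.getElem?_eq_some_iff.1 h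
  exact ⟨w.take p, w.drop (p + 1), by simp, by simp; omega⟩

theorem exists_eq_append_append {w : List α} {p q : ℕ} {i : α} (hpq : p < q)
    (hp : w[p]? = some i) (hq : w[q]? = some i) :
    ∃ x u y, w = x ++ i :: (u ++ i :: y) ∧ x.length = p ∧ x.length + u.length + 1 = q := by
  obtain ⟨x, z, rfl, rfl⟩ := exists_eq_append_of_getElem? hp
  obtain ⟨d, rfl⟩ := Nat.exists_eq_add_of_lt hpq
  have hq' : z[d]? = some i := by
    rw [List.getElem?_append_right (by omega)] at hq
    simpa [show x.length + d + 1 - x.length = d + 1 by omega] using hq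
  obtain ⟨u, y, rfl, rfl⟩ := exists_eq_append_of_getElem? hq'
  exact ⟨x, u, y, rfl, rfl, rfl⟩

theorem getElem?_middle {x u y : List α} {a b k : α} (hk : k ∈ u) :
    ∃ m, x.length < m ∧ m < x.length + u.length + 1 ∧
      (x ++ a :: (u ++ b :: y))[m]? = some k := by
  obtain ⟨d, hd, rfl⟩ := List.getElem_of_mem hk
  refine ⟨x.length + (d + 1), by omega, by omega, ?_⟩
  simp [List.getElem?_append_right, List.getElem?_append_left, hd]

theorem mem_middle {x u y : List α} {a b j : α} {m : ℕ} (h1 : x.length < m)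
    (h2 : m < x.length + u.length + 1) (h : (x ++ a :: (u ++ b :: y))[m]? = some j) : j ∈ u := by
  obtain ⟨d, rfl⟩ := Nat.exists_eq_add_of_lt h1
  rw [List.getElem?_append_right (by omega),
    show x.length + d + 1 - x.length = d + 1 by omega, List.getElem?_cons_succ,
    List.getElem?_append_left (by omega)] at h
  exact List.mem_of_getElem? h

/-- The position that `q` takes after erasing position `r`. -/
def shift (r q : ℕ) : ℕ := if r < q then q - 1 else q

theorem getElem?_eraseIdx_shift (w : List α) {r q : ℕ} (h : q ≠ r) :
    (w.eraseIdx r)[shift r q]? = w[q]? := by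
  rw [List.getElem?_eraseIdx, shift]
  split_ifs <;> first | rfl | omega | (congr 1; omega)

theorem exists_shift_eq (r m : ℕ) : ∃ k, k ≠ r ∧ shift r k = m := by
  by_cases h : m < r
  · exact ⟨m, by omega, by simp [shift]; omega⟩
  · exact ⟨m + 1, by omega, by simp [shift]; omega⟩

theorem shift_lt_shift {r a b : ℕ} (ha : a ≠ r) (hb : b ≠ r) :
    shift r a < shift r b ↔ a < b := by
  unfold shift
  split_ifs <;> omega

theorem eraseIdx_shift_comm (w : List α) (q r : ℕ) :
    (w.eraseIdx r).eraseIdx (shift r q) = (w.eraseIdx q).eraseIdx (shift q r) := by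
  apply List.ext_getElem?
  intro m
  simp only [List.getElem?_eraseIdx, shift]
  split_ifs <;> first | rfl | omega

theorem eraseIdx_eq_of_forall_eq {w : List α} {q r : ℕ} {i : α}
    (h : ∀ k, min q r ≤ k → k ≤ max q r → w[k]? = some i) :
    w.eraseIdx q = w.eraseIdx r := by
  apply List.ext_getElem?
  intro m
  simp only [List.getElem?_eraseIdx]
  split_ifs
  · rfl
  · rw [h m (by omega) (by omega), h (m + 1) (by omega) (by omega)]
  · rw [h m (by omega) (by omega), h (m + 1) (by omega) (by omega)]
  · rfl

variable [LinearOrder α]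

/-- One rewriting step: in a factor `i u i`, erase the right `i` if no letter of `u` exceeds `i`,
or the left `i` if no letter of `u` is below `i`. -/
inductive Step : List α → List α → Prop
  | eraseRight (x u y : List α) (i : α) (h : ∀ k ∈ u, k ≤ i) :
      Step (x ++ i :: (u ++ i :: y)) (x ++ i :: (u ++ y))
  | eraseLeft (x u y : List α) (i : α) (h : ∀ k ∈ u, i ≤ k) :
      Step (x ++ i :: (u ++ i :: y)) (x ++ (u ++ i :: y))

/-- A word is reduced if no rewriting step applies to it. -/
def Reduced (w : List α) : Prop := ∀ v, ¬ Step w v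

/-- Position `q` of `w` can be erased by a rewriting step whose other end is at position `p`. -/
def Witness (w : List α) (q p : ℕ) : Prop :=
  p ≠ q ∧ ∃ i, w[p]? = some i ∧ w[q]? = some i ∧
    (∀ k j, p < k → k < q → w[k]? = some j → j ≤ i) ∧
    (∀ k j, q < k → k < p → w[k]? = some j → i ≤ j)

theorem step_iff {w v : List α} : Step w v ↔ ∃ q p, Witness w q p ∧ v = w.eraseIdx q := by
  constructor
  · rintro (⟨x, u, y, i, h⟩ | ⟨x, u, y, i, h⟩)
    · refine ⟨x.length + (u.length + 1), x.length, ⟨by omega, i, by simp,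
        by simp, fun k j h1 h2 hj => h j (mem_middle h1 h2 hj),
        fun k j h1 h2 _ => by omega⟩, ?_⟩
      simp [List.eraseIdx_append_of_length_le]
    · refine ⟨x.length, x.length + (u.length + 1), ⟨by omega, i,
        by simp, by simp, fun k j h1 h2 _ => by omega,
        fun k j h1 h2 hj => h j (mem_middle h1 h2 hj)⟩, ?_⟩
      simp [List.eraseIdx_append_of_length_le]
  · rintro ⟨q, p, ⟨hne, i, hp, hq, hle, hge⟩, rfl⟩
    rcases lt_or_gt_of_ne hne with hlt | hlt
    · obtain ⟨x, u, y, rfl, rfl, rfl⟩ := exists_eq_append_append hlt hp hq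
      have := Step.eraseRight x u y i fun k hk => by
        obtain ⟨m, h1, h2, h3⟩ := getElem?_middle (x := x) (y := y) (a := i) (b := i) hk
        exact hle m k h1 h2 h3
      convert this using 1
      rw [add_assoc]
      simp [List.eraseIdx_append_of_length_le]
    · obtain ⟨x, u, y, rfl, rfl, rfl⟩ := exists_eq_append_append hlt hq hp
      have := Step.eraseLeft x u y i fun k hk => by
        obtain ⟨m, h1, h2, h3⟩ := getElem?_middle (x := x) (y := y) (a := i) (b := i) hk
        exact hge m k h1 h2 h3
      convert this using 1
      simp [List.eraseIdx_append_of_length_le]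

theorem Witness.eraseIdx {w : List α} {q p r : ℕ} (h : Witness w q p) (hq : q ≠ r)
    (hp : p ≠ r) : Witness (w.eraseIdx r) (shift r q) (shift r p) := by
  obtain ⟨hne, i, h1, h2, h3, h4⟩ := h
  refine ⟨?_, i, ?_, ?_, ?_, ?_⟩
  · have := shift_lt_shift hp hq
    have := shift_lt_shift hq hp
    omega
  · rwa [getElem?_eraseIdx_shift w hp]
  · rwa [getElem?_eraseIdx_shift w hq]
  all_goals
    intro m j ha hb hj
    obtain ⟨k, hk, rfl⟩ := exists_shift_eq r m
    rw [getElem?_eraseIdx_shift w hk] at hj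
    rw [shift_lt_shift (by assumption) (by assumption)] at ha hb
    first | exact h3 k j ha hb hj | exact h4 k j ha hb hj

theorem Witness.avoid {w : List α} {q r p s : ℕ} (h : Witness w q p) (h' : Witness w r s)
    (hqr : q ≠ r) : w.eraseIdx q = w.eraseIdx r ∨ ∃ t, t ≠ r ∧ Witness w q t := by
  by_cases hp : p = r
  swap
  · exact .inr ⟨p, hp, h⟩
  subst hp
  obtain ⟨-, i, h1, h2, h3, h4⟩ := h
  obtain ⟨hsp, i', h5, h6, h7, h8⟩ := h'
  obtain rfl : i = i' := by simpa [h1] using h6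
  have hlen : ∀ k, k ≤ max p q → ∃ j, w[k]? = some j := by
    intro k hk
    have := (List.getElem?_eq_some_iff.1 h1).1
    have := (List.getElem?_eq_some_iff.1 h2).1
    exact ⟨w[k], List.getElem?_eq_getElem (by omega)⟩
  by_cases hc : (p < q ∧ q ≤ s) ∨ (s ≤ q ∧ q < p)
  · left
    refine eraseIdx_eq_of_forall_eq (i := i) fun k hk1 hk2 => ?_
    obtain ⟨j, hj⟩ := hlen k (by omega)
    rcases eq_or_ne k p with rfl | hkp
    · exact h1
    rcases eq_or_ne k q with rfl | hkq
    · exact h2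
    rw [hj]
    rcases hc with hc | hc
    · rw [le_antisymm (h3 k j (by omega) (by omega) hj) (h8 k j (by omega) (by omega) hj)]
    · rw [le_antisymm (h7 k j (by omega) (by omega) hj) (h4 k j (by omega) (by omega) hj)]
  · right
    refine ⟨s, hsp, by omega, i, h5, h2, fun k j ha hb hj => ?_, fun k j ha hb hj => ?_⟩
    · rcases lt_trichotomy k p with hk | rfl | hk
      · exact h7 k j ha hk hj
      · exact (Option.some.inj (hj.symm.trans h1)).le
      · exact h3 k j hk hb hj
    · rcases lt_trichotomy k p with hk | rfl | hk
      · exact h4 k j ha hk hj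
      · exact (Option.some.inj (hj.symm.trans h1)).ge
      · exact h8 k j hk hb hj

theorem Step.diamond {w a b : List α} (ha : Step w a) (hb : Step w b) :
    a = b ∨ ∃ d, Step a d ∧ Step b d := by
  obtain ⟨q, p, hq, rfl⟩ := step_iff.1 ha
  obtain ⟨r, s, hr, rfl⟩ := step_iff.1 hb
  by_cases hqr : q = r
  · exact .inl (by rw [hqr])
  rcases hq.avoid hr hqr with h | ⟨t, ht, hqt⟩
  · exact .inl h
  rcases hr.avoid hq (Ne.symm hqr) with h | ⟨t', ht', hrt⟩
  · exact .inl h.symm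
  exact .inr ⟨_, step_iff.2 ⟨_, _, hrt.eraseIdx (Ne.symm hqr) ht', rfl⟩,
    step_iff.2 ⟨_, _, hqt.eraseIdx hqr ht, (eraseIdx_shift_comm w q r).symm⟩⟩

theorem join_of_eqvGen {a b : List α} (h : Relation.EqvGen Step a b) :
    Relation.Join (Relation.ReflTransGen Step) a b := by
  have hequiv : Equivalence (Relation.Join (Relation.ReflTransGen (Step (α := α)))) := by
    refine Relation.equivalence_join_reflTransGen fun a b c hab hac => ?_
    rcases hab.diamond hac with rfl | ⟨d, hb, hc⟩
    · exact ⟨b, .refl, .refl⟩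
    · exact ⟨d, .single hb, .single hc⟩
  induction h with
  | rel x y h => exact ⟨y, .single h, .refl⟩
  | refl x => exact hequiv.refl x
  | symm x y _ ih => exact hequiv.symm ih
  | trans x y z _ _ ih1 ih2 => exact hequiv.trans ih1 ih2

theorem Reduced.eq_of_reflTransGen {a b : List α} (ha : Reduced a)
    (h : Relation.ReflTransGen Step a b) : a = b := by
  rcases h.cases_head with h | ⟨c, hc, -⟩
  · exact h
  · exact absurd hc (ha c)

theorem Reduced.eq_of_eqvGen {a b : List α} (ha : Reduced a) (hb : Reduced b)
    (h : Relation.EqvGen Step a b) : a = b := by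
  obtain ⟨d, h1, h2⟩ := join_of_eqvGen h
  rw [ha.eq_of_reflTransGen h1, hb.eq_of_reflTransGen h2]

theorem Step.append {a b : List α} (h : Step a b) (l r : List α) :
    Step (l ++ a ++ r) (l ++ b ++ r) := by
  rcases h with ⟨x, u, y, i, h⟩ | ⟨x, u, y, i, h⟩
  · simpa using Step.eraseRight (l ++ x) u (y ++ r) i h
  · simpa using Step.eraseLeft (l ++ x) u (y ++ r) i h

theorem Step.length {a b : List α} (h : Step a b) : b.length < a.length := by
  rcases h with ⟨x, u, y, i, h⟩ | ⟨x, u, y, i, h⟩ <;> simp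

theorem Step.reverse {a b : List α} (h : Step a b) : ∃ c, Step a.reverse c := by
  rcases h with ⟨x, u, y, i, h⟩ | ⟨x, u, y, i, h⟩
  · exact ⟨_, by simpa using Step.eraseRight y.reverse u.reverse x.reverse i (by simpa using h)⟩
  · exact ⟨_, by simpa using Step.eraseLeft y.reverse u.reverse x.reverse i (by simpa using h)⟩

theorem Reduced.reverse {w : List α} (h : Reduced w) : Reduced w.reverse := by
  intro v hv
  obtain ⟨c, hc⟩ := hv.reverse
  exact h c (by simpa using hc)

theorem Reduced.of_append {l w r : List α} (h : Reduced (l ++ w ++ r)) : Reduced w :=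
  fun _ hv => h _ (hv.append l r)

theorem exists_reflTransGen_reduced (w : List α) :
    ∃ v, Reduced v ∧ Relation.ReflTransGen Step w v := by
  induction hn : w.length using Nat.strong_induction_on generalizing w with
  | _ m ih =>
    by_cases h : Reduced w
    · exact ⟨w, h, .refl⟩
    · simp only [Reduced, not_forall, not_not] at h
      obtain ⟨c, hc⟩ := h
      obtain ⟨v, hv, hcv⟩ := ih _ (hn ▸ hc.length) c rfl
      exact ⟨v, hv, .head hc hcv⟩

theorem reduced_of_length_le_one {w : List α} (h : w.length ≤ 1) : Reduced w := by
  rintro v (⟨x, u, y, i, -⟩ | ⟨x, u, y, i, -⟩) <;> simp at h <;> omega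

theorem Reduced.length_le_one_of_palindrome {w : List α} (hw : w.Palindrome) (h : Reduced w) :
    w.length ≤ 1 := by
  induction hw with
  | nil => simp
  | singleton x => simp
  | @cons_concat x l hl ih =>
    exfalso
    have hl1 := ih (Reduced.of_append (l := [x]) (r := [x]) (by simpa using h))
    match l, hl1 with
    | [], _ => exact h _ (by simpa using Step.eraseRight [] [] [] x (by simp))
    | [y], _ =>
      rcases le_total y x with hy | hy
      · exact h _ (by simpa using Step.eraseRight [] [y] [] x (by simpa using hy))
      · exact h _ (by simpa using Step.eraseLeft [] [y] [] x (by simpa using hy))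

theorem Reduced.length_lt (S : Finset α) {w : List α} (hw : Reduced w)
    (hS : ∀ k ∈ w, k ∈ S) : w.length < 2 ^ S.card := by
  induction S using Finset.induction_on_max generalizing w with
  | empty =>
    have hnil : w = [] := List.eq_nil_iff_forall_not_mem.2 fun k hk => by simpa using hS k hk
    simp [hnil]
  | insert a S ha ih =>
    have haS : a ∉ S := fun h => lt_irrefl a (ha a h)
    rw [Finset.card_insert_of_notMem haS, pow_succ]
    by_cases haw : a ∈ w
    · obtain ⟨p, q, rfl, hp⟩ := List.eq_append_cons_of_mem haw
      have hq : a ∉ q := by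
        intro hq
        obtain ⟨u, y, rfl⟩ := List.append_of_mem hq
        refine hw _ (Step.eraseRight p u y a fun k hk => ?_)
        rcases Finset.mem_insert.1 (hS k (by simp [hk])) with rfl | hk
        · exact le_rfl
        · exact (ha k hk).le
      have h1 := ih (w := p) (Reduced.of_append (l := []) (r := a :: q) (by simpa using hw))
        fun k hk => Finset.mem_of_mem_insert_of_ne (hS k (by simp [hk])) fun h => hp (h ▸ hk)
      have h2 := ih (w := q) (Reduced.of_append (l := p ++ [a]) (r := []) (by simpa using hw))
        fun k hk => Finset.mem_of_mem_insert_of_ne (hS k (by simp [hk])) fun h => hq (h ▸ hk)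
      simp
      omega
    · have := ih hw fun k hk =>
        Finset.mem_of_mem_insert_of_ne (hS k hk) fun h => haw (h ▸ hk)
      omega

instance [Finite α] : Finite {w : List α // Reduced w} := by
  cases nonempty_fintype α
  exact ((List.finite_length_lt α (2 ^ (Finset.univ : Finset α).card)).subset
    fun w hw => Reduced.length_lt Finset.univ hw fun _ _ => Finset.mem_univ _).to_subtype

/-- Reversal of reduced words. -/
def reverseReduced : Equiv.Perm {w : List α // Reduced w} where
  toFun w := ⟨w.1.reverse, w.2.reverse⟩
  invFun w := ⟨w.1.reverse, w.2.reverse⟩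
  left_inv w := by simp
  right_inv w := by simp

theorem card_fixedPoints_reverseReduced [Finite α] :
    Nat.card (Function.fixedPoints (reverseReduced (α := α))) = Nat.card α + 1 := by
  rw [← Finite.card_option]
  symm
  refine Nat.card_eq_of_bijective (fun o : Option α =>
    ⟨⟨o.toList, reduced_of_length_le_one (by cases o <;> simp)⟩,
      Subtype.ext (by cases o <;> simp [reverseReduced])⟩) ⟨fun a b h => ?_, ?_⟩
  · have h' : a.toList = b.toList := congrArg (fun w => w.1.1) h
    cases a <;> cases b <;> simp_all
  · rintro ⟨⟨w, hw⟩, hfix⟩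
    have hrev : w.reverse = w := congrArg Subtype.val hfix
    have hlen := hw.length_le_one_of_palindrome (List.Palindrome.of_reverse_eq hrev)
    match w, hlen with
    | [], _ => exact ⟨none, rfl⟩
    | [a], _ => exact ⟨some a, rfl⟩

theorem card_reduced_modEq [Finite α] :
    Nat.card {w : List α // Reduced w} ≡ Nat.card α + 1 [MOD 2] := by
  classical
  cases nonempty_fintype {w : List α // Reduced w}
  rw [← card_fixedPoints_reverseReduced, Nat.card_eq_fintype_card, Nat.card_eq_fintype_card]
  have : Fact (Nat.Prime 2) := ⟨Nat.prime_two⟩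
  refine Equiv.Perm.card_fixedPoints_modEq (n := 1) ?_
  funext w
  exact reverseReduced.left_inv w

end Rewriting

section Presentation

variable {n : ℕ}

theorem phiL_append (u v : List (Fin n)) : phiL n (u ++ v) = phiL n u * phiL n v := by
  simp [phiL, FreeMonoid.ofList_append]

theorem phiL_cons (i : Fin n) (v : List (Fin n)) : phiL n (i :: v) = gen i * phiL n v := by
  simp [phiL, gen, FreeMonoid.ofList_cons]

theorem phi_eq_of_rel {u v : FreeMonoid (Fin n)} (h : Rel n u v) : phi n u = phi n v :=
  (Con.eq _).2 (ConGen.Rel.of _ _ h)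

theorem gen_mul_self (i : Fin n) : gen i * gen i = gen i := by
  simpa [gen] using phi_eq_of_rel (.inl ⟨i, rfl, rfl⟩)

theorem gen_mul_gen_mul_gen_of_le {i j : Fin n} (h : j ≤ i) :
    gen i * gen j * gen i = gen i * gen j := by
  rcases h.eq_or_lt with rfl | h
  · simp only [gen_mul_self]
  · simpa [gen] using phi_eq_of_rel (.inr ⟨i, j, h, .inl ⟨rfl, rfl⟩⟩)

theorem gen_mul_gen_mul_gen_of_ge {i j : Fin n} (h : i ≤ j) :
    gen i * gen j * gen i = gen j * gen i := by
  rcases h.eq_or_lt with rfl | h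
  · simp only [gen_mul_self]
  · simpa [gen] using phi_eq_of_rel (.inr ⟨j, i, h, .inr ⟨rfl, rfl⟩⟩)

theorem gen_mul_phiL_mul_gen_of_le {i : Fin n} {u : List (Fin n)} (h : ∀ k ∈ u, k ≤ i) :
    gen i * phiL n u * gen i = gen i * phiL n u := by
  induction u with
  | nil => simpa [phiL] using gen_mul_self i
  | cons k u ih =>
    have hk := gen_mul_gen_mul_gen_of_le (h k (by simp))
    have ih := ih fun k hk => h k (by simp [hk])
    rw [phiL_cons, ← mul_assoc, ← hk, mul_assoc (gen i * gen k), mul_assoc (gen i * gen k), ih]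

theorem gen_mul_phiL_mul_gen_of_ge {i : Fin n} {u : List (Fin n)} (h : ∀ k ∈ u, i ≤ k) :
    gen i * phiL n u * gen i = phiL n u * gen i := by
  induction u with
  | nil => simpa [phiL] using gen_mul_self i
  | cons k u ih =>
    have hk := gen_mul_gen_mul_gen_of_ge (h k (by simp))
    have ih := ih fun k hk => h k (by simp [hk])
    rw [phiL_cons, mul_assoc, mul_assoc (gen k), ← ih]
    simp only [← mul_assoc, hk]

theorem Step.phiL_eq {a b : List (Fin n)} (h : Step a b) : phiL n a = phiL n b := by
  rcases h with ⟨x, u, y, i, h⟩ | ⟨x, u, y, i, h⟩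
  · simp only [phiL_append, phiL_cons]
    rw [← mul_assoc (phiL n u), ← mul_assoc (gen i), ← mul_assoc (gen i),
      gen_mul_phiL_mul_gen_of_le h, mul_assoc]
  · simp only [phiL_append, phiL_cons]
    rw [← mul_assoc (phiL n u), ← mul_assoc (gen i), ← mul_assoc (gen i),
      gen_mul_phiL_mul_gen_of_ge h]

theorem eqvGen_append {a b c d : List (Fin n)} (h1 : Relation.EqvGen Step a b)
    (h2 : Relation.EqvGen Step c d) : Relation.EqvGen Step (a ++ c) (b ++ d) := by
  have hr : Relation.EqvGen Step (a ++ c) (b ++ c) := by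
    induction h1 with
    | rel x y h => exact .rel _ _ (by simpa using h.append [] c)
    | refl x => exact .refl _
    | symm x y _ ih => exact .symm _ _ ih
    | trans x y z _ _ ih1 ih2 => exact .trans _ _ _ ih1 ih2
  have hl : Relation.EqvGen Step (b ++ c) (b ++ d) := by
    clear hr
    induction h2 with
    | rel x y h => exact .rel _ _ (by simpa using h.append b [])
    | refl x => exact .refl _
    | symm x y _ ih => exact .symm _ _ ih
    | trans x y z _ _ ih1 ih2 => exact .trans _ _ _ ih1 ih2
  exact .trans _ _ _ hr hl

theorem Rel.step {u v : FreeMonoid (Fin n)} (h : Rel n u v) : Step u.toList v.toList := by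
  rcases h with ⟨i, rfl, rfl⟩ | ⟨i, j, hij, ⟨rfl, rfl⟩ | ⟨rfl, rfl⟩⟩
  · simpa using Step.eraseRight [] [] [] i (by simp)
  · simpa using Step.eraseRight [] [j] [] i (by simpa using hij.le)
  · simpa using Step.eraseLeft [] [i] [] j (by simpa using hij.le)

theorem eqvGen_of_phiL_eq {a b : List (Fin n)} (h : phiL n a = phiL n b) :
    Relation.EqvGen Step a b := by
  have h' : ConGen.Rel (Rel n) (FreeMonoid.ofList a) (FreeMonoid.ofList b) := (Con.eq _).1 h
  have key : ∀ x y : FreeMonoid (Fin n), ConGen.Rel (Rel n) x y →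
      Relation.EqvGen Step x.toList y.toList := by
    intro x y hxy
    induction hxy with
    | of x y h => exact .rel _ _ h.step
    | refl x => exact .refl _
    | symm _ ih => exact .symm _ _ ih
    | trans _ _ ih1 ih2 => exact .trans _ _ _ ih1 ih2
    | mul _ _ ih1 ih2 => simpa using eqvGen_append ih1 ih2
  simpa using key _ _ h'

theorem phiL_surjective (x : K n) : ∃ w, phiL n w = x := by
  obtain ⟨w, rfl⟩ := Con.mk'_surjective (c := conGen (Rel n)) x
  exact ⟨w.toList, rfl⟩

theorem bijective_phiL_reduced :
    Function.Bijective fun w : {w : List (Fin n) // Reduced w} => phiL n w.1 := by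
  refine ⟨fun a b h => Subtype.ext (a.2.eq_of_eqvGen b.2 (eqvGen_of_phiL_eq h)), fun x => ?_⟩
  obtain ⟨w, rfl⟩ := phiL_surjective x
  obtain ⟨v, hv, hwv⟩ := exists_reflTransGen_reduced w
  refine ⟨⟨v, hv⟩, ?_⟩
  have hphi : phiL n w = phiL n v := by
    clear hv
    induction hwv with
    | refl => rfl
    | tail _ h ih => exact ih.trans h.phiL_eq
  exact hphi.symm

theorem card_modEq (n : ℕ) : Nat.card (K n) ≡ n + 1 [MOD 2] := by
  rw [← Nat.card_eq_of_bijective _ (bijective_phiL_reduced (n := n))]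
  simpa using card_reduced_modEq (α := Fin n)

end Presentation

/-- `|K n|` is even if `n` is odd, and odd if `n` is even. -/
theorem parity (n : ℕ) (hn : 1 ≤ n) :
    (Odd n → Even (Nat.card (K n))) ∧ (Even n → Odd (Nat.card (K n))) := by
  have h := card_modEq n
  simp only [Nat.odd_iff, Nat.even_iff, Nat.ModEq] at h ⊢
  omega

end Kiselman
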